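/- arXiv:2201.08632 — 2 statements merged into one kernel-verified Lean document; each statement's English description precedes it below -/
import Mathlib

section
/- Let q be a prime power and let ν, m₁, m₂, t be positive integers with m₁ ≥ m₂ ≥ t and 2ν ≥ 2m₁ + m₂ + 1. If ℱ₁ ⊆ 𝒫_{m₁} and ℱ₂ ⊆ 𝒫_{m₂} are cross t-intersecting families, then |ℱ₁|·|ℱ₂| ≤ N'(t;m₁;2ν)·N'(t;m₂;2ν). -/
open Finset Module

noncomputable section

/-- Gaussian binomial coefficient `[n choose k]_q` as a rational number. -/
def gaussBinom (q n k : ℕ) : ℚ :=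
  ∏ i ∈ Finset.range k, ((q : ℚ) ^ ((n : ℤ) - i) - 1) / ((q : ℚ) ^ ((k : ℤ) - i) - 1)

/-- `N'(a; m; 2ν)`, the number of `m`-dim totally isotropic subspaces containing
a fixed `a`-dim one. -/
def Nprime (q a m ν : ℕ) : ℚ :=
  ∏ i ∈ Finset.Icc 1 (m - a), ((q : ℚ) ^ (2 * ((ν : ℤ) - m + i)) - 1) / ((q : ℚ) ^ (i : ℤ) - 1)

variable {K V : Type*} [Field K] [AddCommGroup V] [Module K V]

/-- A subspace is totally isotropic w.r.t. the bilinear form `f`. -/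
def TotallyIsotropic (f : V →ₗ[K] V →ₗ[K] K) (W : Submodule K V) : Prop :=
  ∀ x ∈ W, ∀ y ∈ W, f x y = 0

/-- `polar f m` = `𝒫_m`, the set of `m`-dimensional totally isotropic subspaces. -/
def polar (f : V →ₗ[K] V →ₗ[K] K) (m : ℕ) : Set (Submodule K V) :=
  {W | TotallyIsotropic f W ∧ finrank K W = m}

/-- `X` is a `t`-cover of the family `ℱ`. -/
def IsTCover (f : V →ₗ[K] V →ₗ[K] K) (t : ℕ) (ℱ : Set (Submodule K V))
    (X : Submodule K V) : Prop :=
  TotallyIsotropic f X ∧ ∀ F ∈ ℱ, t ≤ finrank K ↥(X ⊓ F)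

/-- `τ_t(ℱ)`, the minimum dimension of a `t`-cover of `ℱ`. -/
def tauCover (f : V →ₗ[K] V →ₗ[K] K) (t : ℕ) (ℱ : Set (Submodule K V)) : ℕ :=
  sInf {x | ∃ X, IsTCover f t ℱ X ∧ finrank K ↥X = x}

def C1 (f : V →ₗ[K] V →ₗ[K] K) (M T : Submodule K V) (m t : ℕ) : Set (Submodule K V) :=
  {F | F ∈ polar f m ∧ T ≤ F ∧ t + 1 ≤ finrank K ↥(F ⊓ M)}

def C2 (f : V →ₗ[K] V →ₗ[K] K) (M T : Submodule K V) (m : ℕ) : Set (Submodule K V) :=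
  {F | F ∈ polar f m ∧ T ≤ F} ∪ {F | F ∈ polar f m ∧ F ≤ M}

def C3 (f : V →ₗ[K] V →ₗ[K] K) (S : Submodule K V) (m : ℕ) : Set (Submodule K V) :=
  {F | F ∈ polar f m ∧ S ≤ F}

def C4 (f : V →ₗ[K] V →ₗ[K] K) (S : Submodule K V) (m t : ℕ) : Set (Submodule K V) :=
  {F | F ∈ polar f m ∧ t ≤ finrank K ↥(F ⊓ S)}

def s0 (q ν m s t : ℕ) : ℚ :=
  gaussBinom q (s - t) 1 * Nprime q (t + 1) m ν - q * gaussBinom q (s - t) 2 * Nprime q (t + 2) m ν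


open Classical in
/-- number of members of `G` above `T` -/
def cntAbove (G : Finset (Submodule K V)) (T : Submodule K V) : ℕ :=
  (G.filter (fun F => T ≤ F)).card

open Classical in
lemma card_filter_mem [Fintype K] [Fintype V] (W : Submodule K V) :
    ((Finset.univ : Finset V).filter (fun x => x ∈ W)).card = Fintype.card K ^ finrank K W := by
  rw [← Module.card_eq_pow_finrank (K := K) (V := W), Fintype.card_subtype]

open Classical in
lemma card_filter_diff [Fintype K] [Fintype V] (W T : Submodule K V) :
    (((Finset.univ : Finset V).filter (fun x => x ∈ W ∧ x ∉ T)).card : ℚ)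
      = (Fintype.card K : ℚ) ^ finrank K W - (Fintype.card K : ℚ) ^ finrank K ↥(T ⊓ W) := by
  have h := Finset.card_filter_add_card_filter_not
    (s := (Finset.univ : Finset V).filter (fun x => x ∈ W)) (fun x => x ∈ T)
  rw [Finset.filter_filter, Finset.filter_filter, card_filter_mem] at h
  have h2 : (Finset.univ : Finset V).filter (fun x => x ∈ W ∧ x ∈ T) =
      (Finset.univ : Finset V).filter (fun x => x ∈ T ⊓ W) := by
    ext x; simp [and_comm]
  rw [h2, card_filter_mem] at h
  have h3 : ((Fintype.card K ^ finrank K ↥(T ⊓ W) : ℕ) : ℚ) +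
    (((Finset.univ : Finset V).filter (fun x => x ∈ W ∧ x ∉ T)).card : ℚ) =
      ((Fintype.card K ^ finrank K W : ℕ) : ℚ) := by exact_mod_cast h
  push_cast at h3
  linarith

open Classical in
lemma double_count [Fintype K] [Fintype V] (G : Finset (Submodule K V))
    (T Y : Submodule K V) (t : ℕ) (M : ℚ)
    (hG : ∀ F ∈ G, T ≤ F → t ≤ finrank K ↥(F ⊓ Y))
    (hM : ∀ x ∈ Y, x ∉ T → (cntAbove G (T ⊔ K ∙ x) : ℚ) ≤ M) :
    (cntAbove G T : ℚ) *
      ((Fintype.card K : ℚ) ^ t - (Fintype.card K : ℚ) ^ finrank K ↥(T ⊓ Y)) ≤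
    ((Fintype.card K : ℚ) ^ finrank K Y - (Fintype.card K : ℚ) ^ finrank K ↥(T ⊓ Y)) * M := by
  set A := (Finset.univ : Finset V).filter (fun x => x ∈ Y ∧ x ∉ T) with hA
  set B := G.filter (fun F => T ≤ F) with hB
  have key := Finset.sum_card_bipartiteAbove_eq_sum_card_bipartiteBelow
    (s := A) (t := B) (fun (x : V) (F : Submodule K V) => x ∈ F)
  have key' : (∑ a ∈ A, ((Finset.bipartiteAbove (fun (x : V) (F : Submodule K V) => x ∈ F) B a).card : ℚ))
     = ∑ b ∈ B, ((Finset.bipartiteBelow (fun (x : V) (F : Submodule K V) => x ∈ F) A b).card : ℚ) := by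
    exact_mod_cast key
  have hq1 : (1 : ℚ) ≤ Fintype.card K := by exact_mod_cast Fintype.card_pos
  rw [← card_filter_diff Y T]
  calc (cntAbove G T : ℚ) * ((Fintype.card K : ℚ) ^ t - (Fintype.card K : ℚ) ^ finrank K ↥(T ⊓ Y))
      = ∑ b ∈ B, ((Fintype.card K : ℚ) ^ t - (Fintype.card K : ℚ) ^ finrank K ↥(T ⊓ Y)) := by
        rw [Finset.sum_const, nsmul_eq_mul]; rfl
    _ ≤ ∑ b ∈ B, ((Finset.bipartiteBelow (fun (x : V) (F : Submodule K V) => x ∈ F) A b).card : ℚ) := by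
        apply Finset.sum_le_sum
        intro F hF
        rw [hB, Finset.mem_filter] at hF
        have e : Finset.bipartiteBelow (fun (x : V) (F : Submodule K V) => x ∈ F) A F =
            (Finset.univ : Finset V).filter (fun x => x ∈ F ⊓ Y ∧ x ∉ T) := by
          ext x; simp [Finset.bipartiteBelow, hA]; tauto
        have e2 : T ⊓ (F ⊓ Y) = T ⊓ Y := by
          rw [← inf_assoc, inf_eq_left.mpr hF.2]
        rw [e, card_filter_diff, e2]
        have := pow_le_pow_right₀ hq1 (hG F hF.1 hF.2)
        linarith
    _ = ∑ a ∈ A, ((Finset.bipartiteAbove (fun (x : V) (F : Submodule K V) => x ∈ F) B a).card : ℚ) := key'.symm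
    _ ≤ ∑ a ∈ A, M := by
        apply Finset.sum_le_sum
        intro x hx
        rw [hA, Finset.mem_filter] at hx
        refine le_trans (le_of_eq ?_) (hM x hx.2.1 hx.2.2)
        have e : Finset.bipartiteAbove (fun (x : V) (F : Submodule K V) => x ∈ F) B x =
            G.filter (fun F => T ⊔ K ∙ x ≤ F) := by
          ext F; simp [Finset.bipartiteAbove, hB, Submodule.span_singleton_le_iff_mem, and_assoc]
        rw [e]; rfl
    _ = (A.card : ℚ) * M := by rw [Finset.sum_const, nsmul_eq_mul]

lemma Nprime_nonneg (q a m ν : ℕ) (hq : 2 ≤ q) (h : m ≤ ν) : 0 ≤ Nprime q a m ν := by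
  have hq1 : (1 : ℚ) ≤ q := by exact_mod_cast (by omega : 1 ≤ q)
  apply Finset.prod_nonneg
  intro i hi
  apply div_nonneg <;> rw [sub_nonneg] <;> apply one_le_zpow₀ hq1 <;> omega

lemma Nprime_self (q m ν : ℕ) : Nprime q m m ν = 1 := by simp [Nprime]

lemma Nprime_succ (q a m ν : ℕ) (hq : 2 ≤ q) (h : a < m) (hm : m ≤ ν) :
    Nprime q a m ν * ((q : ℚ) ^ (m - a) - 1) =
      Nprime q (a + 1) m ν * ((q : ℚ) ^ (2 * (ν - a)) - 1) := by
  have hq1 : (1 : ℚ) < q := by exact_mod_cast (by omega : 1 < q)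
  obtain ⟨k, rfl⟩ : ∃ k, m = a + k + 1 := ⟨m - a - 1, by omega⟩
  obtain ⟨n, rfl⟩ : ∃ n, ν = a + n := ⟨ν - a, by omega⟩
  unfold Nprime
  have e1 : a + k + 1 - a = k + 1 := by omega
  have e2 : a + k + 1 - (a + 1) = k := by omega
  have e3 : a + n - a = n := by omega
  rw [e1, e2, e3, Finset.prod_Icc_succ_top (by omega)]
  have e4 : (2 * (((a + n : ℕ) : ℤ) - ((a + k + 1 : ℕ) : ℤ) + ((k + 1 : ℕ) : ℤ))) = ((2 * n : ℕ) : ℤ) := by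
    push_cast; ring
  rw [e4, zpow_natCast, zpow_natCast]
  have : (q : ℚ) ^ (k + 1) - 1 ≠ 0 := by
    have := one_lt_pow₀ hq1 (n := k + 1) (by omega)
    linarith
  field_simp

lemma Nprime_gain (q a m ν c : ℕ) (hq : 2 ≤ q) (h : a < m) (hm : m ≤ ν) (hc : c + a + m ≤ 2 * ν) :
    (q : ℚ) ^ c * Nprime q (a + 1) m ν ≤ Nprime q a m ν := by
  have hq1 : (1 : ℚ) < q := by exact_mod_cast (by omega : 1 < q)
  have h1 := Nprime_succ q a m ν hq h hm
  have h0 := Nprime_nonneg q (a + 1) m ν hq hm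
  have hpos : 0 < (q : ℚ) ^ (m - a) - 1 := by
    have := one_lt_pow₀ hq1 (n := m - a) (by omega)
    linarith
  refine le_of_mul_le_mul_right ?_ hpos
  rw [h1, mul_comm ((q : ℚ) ^ c), mul_assoc]
  apply mul_le_mul_of_nonneg_left _ h0
  have h2 : (q : ℚ) ^ c * (q : ℚ) ^ (m - a) ≤ (q : ℚ) ^ (2 * (ν - a)) := by
    rw [← pow_add]; exact pow_le_pow_right₀ hq1.le (by omega)
  have h3 := one_le_pow₀ hq1.le (n := c)
  linarith

lemma Nprime_gain_iter (q t m ν c : ℕ) (hq : 2 ≤ q) (hm : m ≤ ν) (hc : c + m + m ≤ 2 * ν + 1) :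
    ∀ k, t + k ≤ m → (q : ℚ) ^ (c * k) * Nprime q (t + k) m ν ≤ Nprime q t m ν := by
  intro k
  induction k with
  | zero => intro _; simp
  | succ k ih =>
    intro hk
    refine le_trans ?_ (ih (by omega))
    have := Nprime_gain q (t + k) m ν c hq (by omega) hm (by omega)
    rw [mul_add, pow_add, mul_one, mul_assoc, ← add_assoc]
    exact mul_le_mul_of_nonneg_left this (by positivity)

open Classical in
lemma polar_count [Fintype K] [Fintype V] (f : V →ₗ[K] V →ₗ[K] K)
    (halt : ∀ x, f x x = 0) (hnd : ∀ x, (∀ y, f x y = 0) → x = 0)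
    (ν m : ℕ) (hV : finrank K V = 2 * ν) (hmν : m ≤ ν)
    (G : Finset (Submodule K V)) (hG : ∀ F ∈ G, F ∈ polar f m) :
    ∀ k, ∀ T : Submodule K V, finrank K T + k = m →
      (cntAbove G T : ℚ) ≤ Nprime (Fintype.card K) (finrank K T) m ν := by
  have hq2 : 2 ≤ Fintype.card K := Fintype.one_lt_card
  intro k
  induction k with
  | zero =>
    intro T hT
    have : finrank K T = m := by omega
    rw [this, Nprime_self]
    have : cntAbove G T ≤ 1 := by
      apply Finset.card_le_one.mpr
      have aux : ∀ F ∈ G.filter (fun F => T ≤ F), T = F := by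
        intro F hF
        rw [Finset.mem_filter] at hF
        exact Submodule.eq_of_le_of_finrank_eq hF.2 (by rw [this, (hG F hF.1).2])
      intro a ha b hb
      rw [← aux a ha, ← aux b hb]
    exact_mod_cast this
  | succ k ih =>
    intro T hT
    by_cases hiso : TotallyIsotropic f T
    swap
    · have : cntAbove G T = 0 := by
        apply Finset.card_eq_zero.mpr
        apply Finset.filter_eq_empty_iff.mpr
        intro F hF hTF
        exact hiso fun x hx y hy => (hG F hF).1 x (hTF hx) y (hTF hy)
      rw [this]
      exact_mod_cast Nprime_nonneg _ _ _ _ hq2 hmν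
    set Y := LinearMap.BilinForm.orthogonal f T with hY
    have hle : ∀ F ∈ G, T ≤ F → F ≤ Y := by
      intro F hF hTF x hx
      rw [hY, LinearMap.BilinForm.mem_orthogonal_iff]
      intro n hn
      exact (hG F hF).1 n (hTF hn) x hx
    have hTY : T ≤ Y := by
      intro x hx
      rw [hY, LinearMap.BilinForm.mem_orthogonal_iff]
      intro n hn
      exact hiso n hn x hx
    have hdimY : finrank K T + finrank K Y = 2 * ν := by
      have h1 := LinearMap.BilinForm.finrank_add_finrank_orthogonal' (B := f) T
      have h2 : LinearMap.ker f = ⊥ := by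
        rw [LinearMap.ker_eq_bot']
        intro x hx
        exact hnd x fun y => by rw [hx]; rfl
      have h3 : T ⊓ LinearMap.ker f = ⊥ := by rw [h2, inf_bot_eq]
      rw [hV] at h1
      change _ + _ = _ + finrank K ↥(T ⊓ LinearMap.ker f) at h1
      rw [h3, finrank_bot] at h1
      simpa using h1
    have key := double_count G T Y m (Nprime (Fintype.card K) (finrank K T + 1) m ν)
      (fun F hF hTF => by rw [inf_eq_left.mpr (hle F hF hTF), (hG F hF).2])
      (fun x _ hx => by
        have h := Submodule.finrank_sup_span_singleton hx
        rw [← h]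
        exact ih _ (by rw [h]; omega))
    rw [inf_eq_left.mpr hTY] at key
    have h1 := Nprime_succ (Fintype.card K) (finrank K T) m ν hq2 (by omega) hmν
    have hq1 : (1 : ℚ) < Fintype.card K := by exact_mod_cast hq2
    set q : ℚ := (Fintype.card K : ℚ) with hqdef
    set a := finrank K T with ha
    have e1 : q ^ m = q ^ a * q ^ (m - a) := by rw [← pow_add]; congr 1; omega
    have e2 : q ^ (finrank K Y) = q ^ a * q ^ (2 * (ν - a)) := by
      rw [← pow_add]; congr 1; omega
    have hpos : 0 < q ^ a * (q ^ (m - a) - 1) := by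
      have := one_lt_pow₀ hq1 (n := m - a) (by omega)
      apply mul_pos (by positivity); linarith
    refine le_of_mul_le_mul_right ?_ hpos
    rw [e1, e2] at key
    calc (cntAbove G T : ℚ) * (q ^ a * (q ^ (m - a) - 1))
        = (cntAbove G T : ℚ) * (q ^ a * q ^ (m - a) - q ^ a) := by ring
      _ ≤ _ := key
      _ = q ^ a * (Nprime (Fintype.card K) (a + 1) m ν * (q ^ (2 * (ν - a)) - 1)) := by ring
      _ = _ := by rw [← h1]; ring

/-- extension through non-covers -/
lemma chain_up [Fintype K] [Fintype V] (G : Finset (Submodule K V)) (H : Set (Submodule K V))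
    (m₂ t τ : ℕ) (M : ℚ) (hM0 : 0 ≤ M) (htm : t ≤ m₂)
    (hH : ∀ F ∈ H, finrank K F = m₂)
    (hcross : ∀ F₁ ∈ G, ∀ F₂ ∈ H, t ≤ finrank K ↥(F₁ ⊓ F₂))
    (hτ : ∀ X : Submodule K V, finrank K X < τ → ∃ F ∈ H, finrank K ↥(X ⊓ F) < t)
    (hM : ∀ T : Submodule K V, finrank K T = τ → (cntAbove G T : ℚ) ≤ M) :
    ∀ k, ∀ T : Submodule K V, finrank K T + k = τ →
      (cntAbove G T : ℚ) ≤ (Fintype.card K : ℚ) ^ ((m₂ - t + 1) * k) * M := by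
  have hq2 : 2 ≤ Fintype.card K := Fintype.one_lt_card
  intro k
  induction k with
  | zero => intro T hT; simpa using hM T (by omega)
  | succ k ih =>
    intro T hT
    obtain ⟨F₂, hF₂, hlt⟩ := hτ T (by omega)
    have key := double_count G T F₂ t _ (fun F hF _ => hcross F hF F₂ hF₂)
      (fun x _ hx => ih (T ⊔ K ∙ x) (by
        rw [Submodule.finrank_sup_span_singleton hx]; omega))
    rw [hH F₂ hF₂] at key
    have hq2' : (2 : ℚ) ≤ Fintype.card K := by exact_mod_cast hq2
    set q : ℚ := (Fintype.card K : ℚ) with hqdef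
    set s := finrank K ↥(T ⊓ F₂) with hs
    have hq1 : (1 : ℚ) < q := by linarith
    have hpos : 0 < q ^ t - q ^ s := sub_pos.mpr (pow_lt_pow_right₀ hq1 hlt)
    refine le_of_mul_le_mul_right ?_ hpos
    refine key.trans ?_
    have hN : 0 ≤ q ^ ((m₂ - t + 1) * k) * M := by positivity
    have e : q ^ ((m₂ - t + 1) * (k + 1)) * M * (q ^ t - q ^ s) =
      (q ^ (m₂ - t + 1) * (q ^ t - q ^ s)) * (q ^ ((m₂ - t + 1) * k) * M) := by ring
    rw [e]
    apply mul_le_mul_of_nonneg_right _ hN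
    have e1 : q ^ (m₂ - t + 1) * q ^ t = q ^ m₂ * q := by
      rw [← pow_add, ← pow_succ]; congr 1; omega
    have e2 : q ^ (m₂ - t + 1) * q ^ s ≤ q ^ m₂ := by
      rw [← pow_add]; exact pow_le_pow_right₀ hq1.le (by omega)
    have e3 : q ^ m₂ * 2 ≤ q ^ m₂ * q := mul_le_mul_of_nonneg_left hq2' (by positivity)
    have e4 : 0 ≤ q ^ s := by positivity
    rw [mul_sub, e1]
    linarith

/-- starting inside a cover -/
lemma chain_start [Fintype K] [Fintype V] (G : Finset (Submodule K V)) (X : Submodule K V)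
    (t : ℕ) (M : ℚ) (hM0 : 0 ≤ M)
    (hX : ∀ F ∈ G, t ≤ finrank K ↥(F ⊓ X)) (htX : t ≤ finrank K X)
    (hM : ∀ T : Submodule K V, finrank K T = t → (cntAbove G T : ℚ) ≤ M) :
    ∀ k ≤ t, ∀ T : Submodule K V, T ≤ X → finrank K T + k = t →
      (cntAbove G T : ℚ) * ∏ i ∈ Finset.Ico (t - k) t,
          ((Fintype.card K : ℚ) ^ t - (Fintype.card K : ℚ) ^ i) ≤
        (∏ i ∈ Finset.Ico (t - k) t,
          ((Fintype.card K : ℚ) ^ finrank K X - (Fintype.card K : ℚ) ^ i)) * M := by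
  have hq2 : 2 ≤ Fintype.card K := Fintype.one_lt_card
  have hq1 : (1 : ℚ) < Fintype.card K := by exact_mod_cast hq2
  intro k
  induction k with
  | zero => intro _ T _ hT; simpa using hM T (by omega)
  | succ k ih =>
    intro hk T hTX hT
    set q : ℚ := (Fintype.card K : ℚ) with hqdef
    have hpos : 0 < ∏ i ∈ Finset.Ico (t - k) t, (q ^ t - q ^ i) := by
      apply Finset.prod_pos
      intro i hi
      rw [Finset.mem_Ico] at hi
      exact sub_pos.mpr (pow_lt_pow_right₀ hq1 hi.2)
    have key := double_count G T X t _ (fun F hF _ => hX F hF)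
      (fun x hx hxT => (le_div_iff₀ hpos).mpr (ih (by omega) (T ⊔ K ∙ x)
        (sup_le hTX ((Submodule.span_singleton_le_iff_mem _ _).mpr hx)) (by
        rw [Submodule.finrank_sup_span_singleton hxT]; omega)))
    rw [inf_eq_left.mpr hTX, ← mul_div_assoc, le_div_iff₀ hpos] at key
    have e : finrank K T = t - (k + 1) := by omega
    have e' : t - (k + 1) + 1 = t - k := by omega
    rw [e] at key
    rw [Finset.prod_eq_prod_Ico_succ_bot (by omega : t - (k + 1) < t),
      Finset.prod_eq_prod_Ico_succ_bot (by omega : t - (k + 1) < t), e']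
    linarith

lemma gauss_step (q : ℚ) (hq : 2 ≤ q) (t n : ℕ) (h : t ≤ n) :
    ∏ i ∈ Finset.range t, (q ^ (n + 1) - q ^ i) ≤
      q ^ (t + 1) * ∏ i ∈ Finset.range t, (q ^ n - q ^ i) := by
  have hq1 : 1 < q := by linarith
  cases t with
  | zero => simpa using hq1.le
  | succ t =>
    rw [Finset.prod_range_succ', Finset.prod_range_succ]
    have e : ∏ k ∈ Finset.range t, (q ^ (n + 1) - q ^ (k + 1)) =
        q ^ t * ∏ k ∈ Finset.range t, (q ^ n - q ^ k) := by
      have : q ^ t = ∏ k ∈ Finset.range t, q := by simp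
      rw [this, ← Finset.prod_mul_distrib]
      apply Finset.prod_congr rfl
      intros; ring
    rw [e]
    have hP : 0 ≤ ∏ k ∈ Finset.range t, (q ^ n - q ^ k) := by
      apply Finset.prod_nonneg
      intro i hi
      rw [Finset.mem_range] at hi
      exact sub_nonneg.mpr (pow_le_pow_right₀ hq1.le (by omega))
    set P := ∏ k ∈ Finset.range t, (q ^ n - q ^ k)
    have e2 : q ^ (t + 1 + 1) * (P * (q ^ n - q ^ t)) = (q ^ t * P) * (q ^ 2 * (q ^ n - q ^ t)) := by
      ring
    rw [e2]
    apply mul_le_mul_of_nonneg_left _ (by positivity)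
    have h1 : q ^ (t + 1) ≤ q ^ n := pow_le_pow_right₀ hq1.le h
    have h2 : 0 ≤ q ^ n := by positivity
    have h3 : q ^ 2 * (q ^ n - q ^ t) = q * (q * q ^ n - q ^ (t + 1)) := by ring
    rw [h3, pow_zero, pow_succ]
    have h4 : 2 * q ^ n ≤ q * q ^ n := mul_le_mul_of_nonneg_right hq h2
    have h5 : q * q ^ n ≤ q * (q * q ^ n - q ^ (t + 1)) :=
      mul_le_mul_of_nonneg_left (by linarith) (by linarith)
    linarith

lemma gauss_le (q : ℚ) (hq : 2 ≤ q) (t : ℕ) : ∀ k,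
    ∏ i ∈ Finset.range t, (q ^ (t + k) - q ^ i) ≤
      q ^ ((t + 1) * k) * ∏ i ∈ Finset.range t, (q ^ t - q ^ i) := by
  intro k
  induction k with
  | zero => simp
  | succ k ih =>
    refine (gauss_step q hq t (t + k) (by omega)).trans ?_
    rw [mul_add, mul_one, pow_add q ((t + 1) * k), mul_comm (q ^ ((t + 1) * k)), mul_assoc]
    exact mul_le_mul_of_nonneg_left ih (by positivity)

lemma half_bound [Fintype K] [Fintype V] (f : V →ₗ[K] V →ₗ[K] K)
    (halt : ∀ x, f x x = 0) (hnd : ∀ x, (∀ y, f x y = 0) → x = 0)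
    (ν m₁ m₂ t a b : ℕ) (hV : finrank K V = 2 * ν) (hmν : m₁ ≤ ν)
    (htm : t ≤ m₂) (hb : t + b ≤ m₁)
    (G H : Finset (Submodule K V)) (hG : ∀ F ∈ G, F ∈ polar f m₁)
    (hH : ∀ F ∈ H, F ∈ polar f m₂)
    (hcross : ∀ F₁ ∈ G, ∀ F₂ ∈ H, t ≤ finrank K ↥(F₁ ⊓ F₂))
    (hτ : ∀ X : Submodule K V, finrank K X < t + b → ∃ F ∈ H, finrank K ↥(X ⊓ F) < t)
    (X : Submodule K V) (hXd : finrank K X = t + a)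
    (hX : ∀ F ∈ G, t ≤ finrank K ↥(F ⊓ X)) :
    (G.card : ℚ) ≤ (Fintype.card K : ℚ) ^ ((t + 1) * a) *
      ((Fintype.card K : ℚ) ^ ((m₂ - t + 1) * b) * Nprime (Fintype.card K) (t + b) m₁ ν) := by
  have hq2 : 2 ≤ Fintype.card K := Fintype.one_lt_card
  have hq2' : (2 : ℚ) ≤ Fintype.card K := by exact_mod_cast hq2
  have hN := Nprime_nonneg (Fintype.card K) (t + b) m₁ ν hq2 hmν
  have h1 := chain_up G (H : Set (Submodule K V)) m₂ t (t + b) _ hN htm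
    (fun F hF => (hH F hF).2) hcross hτ
    (fun T hT => by
      have := polar_count f halt hnd ν m₁ hV hmν G hG (m₁ - (t + b)) T (by omega)
      rwa [hT] at this) b
  have h2 := chain_start G X t _ (by positivity) hX (by omega)
    (fun T hT => h1 T (by omega)) t le_rfl ⊥ bot_le (by simp)
  rw [Nat.sub_self, ← Finset.range_eq_Ico, hXd] at h2
  have hpos : 0 < ∏ i ∈ Finset.range t, ((Fintype.card K : ℚ) ^ t - (Fintype.card K : ℚ) ^ i) := by
    apply Finset.prod_pos
    intro i hi
    rw [Finset.mem_range] at hi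
    exact sub_pos.mpr (pow_lt_pow_right₀ (by linarith) hi)
  have hc : cntAbove G ⊥ = G.card := by simp [cntAbove]
  rw [hc] at h2
  refine le_of_mul_le_mul_right ?_ hpos
  refine h2.trans ?_
  have := mul_le_mul_of_nonneg_right (gauss_le (Fintype.card K : ℚ) hq2' t a)
    (by positivity : 0 ≤ (Fintype.card K : ℚ) ^ ((m₂ - t + 1) * b) * Nprime (Fintype.card K) (t + b) m₁ ν)
  linarith

lemma exists_min_cover [Fintype V] (t : ℕ) (H : Finset (Submodule K V)) (hne : H.Nonempty)
    (m : ℕ) (X₀ : Submodule K V) (h₀ : finrank K X₀ = m)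
    (hX₀ : ∀ F ∈ H, t ≤ finrank K ↥(F ⊓ X₀)) :
    ∃ b, t + b ≤ m ∧ (∃ X : Submodule K V, finrank K X = t + b ∧
        ∀ F ∈ H, t ≤ finrank K ↥(F ⊓ X)) ∧
      ∀ X : Submodule K V, finrank K X < t + b → ∃ F ∈ H, finrank K ↥(X ⊓ F) < t := by
  classical
  have hex : ∃ d, ∃ X : Submodule K V, finrank K X = d ∧ ∀ F ∈ H, t ≤ finrank K ↥(F ⊓ X) :=
    ⟨m, X₀, h₀, hX₀⟩
  obtain ⟨X, hXd, hX⟩ := Nat.find_spec hex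
  obtain ⟨F, hF⟩ := hne
  have ht : t ≤ Nat.find hex := by
    rw [← hXd]; exact (hX F hF).trans (Submodule.finrank_mono inf_le_right)
  have e : t + (Nat.find hex - t) = Nat.find hex := by omega
  refine ⟨Nat.find hex - t, ?_, ?_, ?_⟩
  · rw [e]; exact Nat.find_min' hex ⟨X₀, h₀, hX₀⟩
  · rw [e]; exact ⟨X, hXd, hX⟩
  · rw [e]
    intro Y hY
    by_contra hcon
    push Not at hcon
    exact Nat.find_min hex hY ⟨Y, rfl, fun F hF => by rw [inf_comm]; exact hcon F hF⟩

theorem stmt_0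
    (q ν m₁ m₂ t : ℕ) (hq : IsPrimePow q)
    {K : Type} [Field K] [Fintype K] (hK : Fintype.card K = q)
    (f : (Fin (2 * ν) → K) →ₗ[K] (Fin (2 * ν) → K) →ₗ[K] K)
    (halt : ∀ x, f x x = 0)
    (hnd : ∀ x, (∀ y, f x y = 0) → x = 0)
    (hν : 0 < ν) (hm₂ : 0 < m₂) (ht : 0 < t)
    (hm : m₂ ≤ m₁) (hmt : t ≤ m₂) (hdim : 2 * m₁ + m₂ + 1 ≤ 2 * ν)
    (ℱ₁ ℱ₂ : Set (Submodule K (Fin (2 * ν) → K)))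
    (h1 : ℱ₁ ⊆ polar f m₁) (h2 : ℱ₂ ⊆ polar f m₂)
    (hcross : ∀ F₁ ∈ ℱ₁, ∀ F₂ ∈ ℱ₂, t ≤ finrank K ↥(F₁ ⊓ F₂)) :
    (ℱ₁.ncard : ℚ) * ℱ₂.ncard ≤ Nprime q t m₁ ν * Nprime q t m₂ ν := by
  classical
  have hq2 : 2 ≤ q := hq.two_le
  have hN1 := Nprime_nonneg q t m₁ ν hq2 (by omega)
  have hN2 := Nprime_nonneg q t m₂ ν hq2 (by omega)
  have : Fintype (Submodule K (Fin (2 * ν) → K)) := Fintype.ofFinite _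
  obtain ⟨G, rfl⟩ : ∃ G : Finset (Submodule K (Fin (2 * ν) → K)), (G : Set _) = ℱ₁ :=
    ⟨ℱ₁.toFinset, by simp⟩
  obtain ⟨H, rfl⟩ : ∃ G : Finset (Submodule K (Fin (2 * ν) → K)), (G : Set _) = ℱ₂ :=
    ⟨ℱ₂.toFinset, by simp⟩
  rw [Set.ncard_coe_finset, Set.ncard_coe_finset]
  rcases G.eq_empty_or_nonempty with rfl | hGne
  · simpa using mul_nonneg hN1 hN2
  rcases H.eq_empty_or_nonempty with rfl | hHne
  · simpa using mul_nonneg hN1 hN2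
  have hV : finrank K (Fin (2 * ν) → K) = 2 * ν := by simp
  have hcross' : ∀ F₁ ∈ H, ∀ F₂ ∈ G, t ≤ finrank K ↥(F₁ ⊓ F₂) := by
    intro F₁ h₁ F₂ h₂
    rw [inf_comm]; exact hcross F₂ h₂ F₁ h₁
  obtain ⟨F, hF⟩ := hGne
  obtain ⟨F', hF'⟩ := hHne
  obtain ⟨b, hb, ⟨X, hXd, hX⟩, hbmin⟩ := exists_min_cover t H ⟨F', hF'⟩ m₁ F (h1 hF).2
    (fun A hA => hcross' A hA F hF)
  obtain ⟨a, ha, ⟨Y, hYd, hY⟩, hamin⟩ := exists_min_cover t G ⟨F, hF⟩ m₂ F' (h2 hF').2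
    (fun A hA => hcross A hA F' hF')
  have B1 := half_bound f halt hnd ν m₁ m₂ t a b hV (by omega) hmt hb G H (fun _ h => h1 h)
    (fun _ h => h2 h) hcross hbmin Y hYd hY
  have B2 := half_bound f halt hnd ν m₂ m₁ t b a hV (by omega) (by omega) ha H G (fun _ h => h2 h)
    (fun _ h => h1 h) hcross' hamin X hXd hX
  rw [hK] at B1 B2
  have C1 := Nprime_gain_iter q t m₁ ν (m₂ + 2) hq2 (by omega) (by omega) b hb
  have C2 := Nprime_gain_iter q t m₂ ν (m₁ + 2) hq2 (by omega) (by omega) a ha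
  have n1 := Nprime_nonneg q (t + b) m₁ ν hq2 (by omega)
  have n2 := Nprime_nonneg q (t + a) m₂ ν hq2 (by omega)
  have e1 : (q : ℚ) ^ ((m₂ + 2) * b) = (q : ℚ) ^ ((m₂ - t + 1) * b) * (q : ℚ) ^ ((t + 1) * b) := by
    rw [← pow_add, ← add_mul]; congr 2; omega
  have e2 : (q : ℚ) ^ ((m₁ + 2) * a) = (q : ℚ) ^ ((m₁ - t + 1) * a) * (q : ℚ) ^ ((t + 1) * a) := by
    rw [← pow_add, ← add_mul]; congr 2; omega
  calc (G.card : ℚ) * H.card ≤ _ := mul_le_mul B1 B2 (by positivity) (by positivity)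
    _ = ((q : ℚ) ^ ((m₂ + 2) * b) * Nprime q (t + b) m₁ ν) *
        ((q : ℚ) ^ ((m₁ + 2) * a) * Nprime q (t + a) m₂ ν) := by rw [e1, e2]; ring
    _ ≤ _ := mul_le_mul C1 C2 (by positivity) hN1

end
end

section
/- Let q be a prime power and let ν, m₁, m₂, t be positive integers with m₁ ≥ m₂ ≥ t and 2ν ≥ 2m₁ + m₂ + 1. If ℱ₁ ⊆ 𝒫_{m₁} and ℱ₂ ⊆ 𝒫_{m₂} are cross t-intersecting families with |ℱ₁|·|ℱ₂| = N'(t;m₁;2ν)·N'(t;m₂;2ν), then there exists T ∈ 𝒫_t such that ℱᵢ = {F ∈ 𝒫_{mᵢ} : T ⊆ F} for i = 1, 2; in particular, the fixed t-dimensional totally isotropic subspace T is contained in every member of ℱ₁ and of ℱ₂. -/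
open Finset Module

noncomputable section

variable {K V : Type*} [Field K] [AddCommGroup V] [Module K V]

open Classical in
theorem aux_card_le {ι α : Type*} (A : Finset α) (I : Finset ι) (P : ι → α → Prop) (B : ℚ)
    (hcov : ∀ F ∈ A, ∃ i ∈ I, P i F)
    (hB : ∀ i ∈ I, ((A.filter (P i)).card : ℚ) ≤ B) :
    (A.card : ℚ) ≤ I.card * B := by
  have h1 : A ⊆ I.biUnion (fun i => A.filter (P i)) := by
    intro F hF
    obtain ⟨i, hi, hp⟩ := hcov F hF
    simp only [Finset.mem_biUnion, Finset.mem_filter]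
    exact ⟨i, hi, hF, hp⟩
  calc (A.card : ℚ) ≤ ((∑ i ∈ I, (A.filter (P i)).card : ℕ) : ℚ) := by
        exact_mod_cast (Finset.card_le_card h1).trans Finset.card_biUnion_le
    _ = ∑ i ∈ I, ((A.filter (P i)).card : ℚ) := by push_cast; rfl
    _ ≤ I.card • B := Finset.sum_le_card_nsmul _ _ _ hB
    _ = I.card * B := by simp

theorem aux_exists_sub [FiniteDimensional K V] (W : Submodule K V) (k : ℕ)
    (hk : k ≤ finrank K W) : ∃ U ≤ W, finrank K U = k := by
  let b := finBasis K W
  let v : Fin k → V := fun i => (b (Fin.castLE hk i) : V)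
  have hv : LinearIndependent K v := by
    have h1 : LinearIndependent K (fun i : Fin k => b (Fin.castLE hk i)) :=
      b.linearIndependent.comp _ (Fin.castLE_injective hk)
    exact h1.map' W.subtype (Submodule.ker_subtype W)
  refine ⟨Submodule.span K (Set.range v), ?_, ?_⟩
  · rw [Submodule.span_le]
    rintro _ ⟨i, rfl⟩
    exact (b (Fin.castLE hk i)).2
  · rw [finrank_span_eq_card hv]; simp

theorem aux_finrank_sup_span [FiniteDimensional K V] (S : Submodule K V) (w : V) (hw : w ∉ S) :
    finrank K ↥(S ⊔ Submodule.span K {w}) = finrank K S + 1 := by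
  have h := Submodule.finrank_sup_add_finrank_inf_eq S (Submodule.span K {w})
  have hw0 : w ≠ 0 := fun h => hw (h ▸ S.zero_mem)
  have h2 : S ⊓ Submodule.span K {w} = ⊥ := by
    rw [← disjoint_iff]
    exact (Submodule.disjoint_span_singleton' hw0).2 hw
  rw [h2, finrank_bot, finrank_span_singleton hw0] at h
  omega

open Classical in
theorem aux_join [Fintype K] [FiniteDimensional K V] (t m₂ : ℕ)
    (S G : Submodule K V) (hG : finrank K G = m₂) (hSG : finrank K ↥(S ⊓ G) < t) (htm : t ≤ m₂)
    (A : Finset (Submodule K V)) (hA : ∀ F ∈ A, S ≤ F ∧ t ≤ finrank K ↥(F ⊓ G)) (B : ℚ)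
    (hB0 : 0 ≤ B)
    (hB : ∀ S' : Submodule K V, finrank K S' = finrank K S + 1 →
      ((A.filter (fun F => S' ≤ F)).card : ℚ) ≤ B) :
    (A.card : ℚ) ≤ (Fintype.card K : ℚ) ^ (m₂ - t + 1) * B := by
  obtain ⟨C, hC⟩ := Submodule.exists_isCompl (S ⊓ G)
  have hCG : m₂ - t + 1 ≤ finrank K ↥(C ⊓ G) := by
    have h1 := Submodule.finrank_sup_add_finrank_inf_eq C G
    have h2 := Submodule.finrank_add_eq_of_isCompl hC
    have h3 := Submodule.finrank_le (C ⊔ G)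
    omega
  obtain ⟨W, hW, hWd⟩ := aux_exists_sub (C ⊓ G) _ hCG
  have hWS : ∀ w ∈ W, w ≠ 0 → w ∉ S := by
    intro w hw h0 hS
    have := hW hw
    apply h0
    have : w ∈ (S ⊓ G) ⊓ C := ⟨⟨hS, this.2⟩, this.1⟩
    rw [hC.inf_eq_bot] at this
    simpa using this
  have : Finite W := Module.finite_of_finite K
  have : Fintype W := Fintype.ofFinite W
  have key := aux_card_le A (Finset.univ.filter (fun w : W => w ≠ 0))
    (fun w F => S ⊔ Submodule.span K {(w : V)} ≤ F) B ?_ ?_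
  · refine key.trans ?_
    apply mul_le_mul_of_nonneg_right _ hB0
    have h1 : (Finset.univ.filter (fun w : W => w ≠ 0)).card ≤ Fintype.card W :=
      Finset.card_le_univ _
    rw [Module.card_eq_pow_finrank (K := K), hWd] at h1
    exact_mod_cast h1
  · intro F hF
    obtain ⟨hSF, htF⟩ := hA F hF
    have h1 := Submodule.finrank_sup_add_finrank_inf_eq (F ⊓ G) W
    have h2 : finrank K ↥((F ⊓ G) ⊔ W) ≤ finrank K G :=
      Submodule.finrank_mono (sup_le inf_le_right (hW.trans inf_le_right))
    have h3 : (F ⊓ G) ⊓ W ≠ ⊥ := by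
      intro h
      rw [h, finrank_bot] at h1
      omega
    obtain ⟨w, hw, hw0⟩ := Submodule.exists_mem_ne_zero_of_ne_bot h3
    refine ⟨⟨w, hw.2⟩, ?_, ?_⟩
    · simp [hw0]
    · refine sup_le hSF ?_
      rw [Submodule.span_singleton_le_iff_mem]
      exact hw.1.1
  · intro w hw
    apply hB
    apply aux_finrank_sup_span
    apply hWS _ w.2
    simpa using hw

open Classical in
theorem aux_iter [Fintype K] [FiniteDimensional K V] (t m₂ n : ℕ) (htm : t ≤ m₂)
    (A₁ A₂ : Finset (Submodule K V)) (hA₂ : ∀ G ∈ A₂, finrank K G = m₂)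
    (hcross : ∀ F ∈ A₁, ∀ G ∈ A₂, t ≤ finrank K ↥(F ⊓ G))
    (hmin : ∀ S : Submodule K V, finrank K S < n → ∃ G ∈ A₂, finrank K ↥(S ⊓ G) < t)
    (B : ℚ) (hB0 : 0 ≤ B)
    (hB : ∀ S : Submodule K V, finrank K S = n → ((A₁.filter (fun F => S ≤ F)).card : ℚ) ≤ B)
    (k : ℕ) : ∀ (S : Submodule K V), finrank K S + k = n →
      ((A₁.filter (fun F => S ≤ F)).card : ℚ) ≤
        ((Fintype.card K : ℚ) ^ (m₂ - t + 1)) ^ k * B := by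
  induction k with
  | zero => intro S hS; simpa using hB S (by omega)
  | succ k ih =>
    intro S hS
    obtain ⟨G, hG, hSG⟩ := hmin S (by omega)
    have := aux_join t m₂ S G (hA₂ G hG) hSG htm (A₁.filter (fun F => S ≤ F)) ?_
      (((Fintype.card K : ℚ) ^ (m₂ - t + 1)) ^ k * B) (by positivity) ?_
    · rw [pow_succ']; rw [mul_assoc]; exact this
    · intro F hF
      rw [Finset.mem_filter] at hF
      exact ⟨hF.2, hcross F hF.1 G hG⟩
    · intro S' hS'
      refine le_trans ?_ (ih S' (by omega))
      exact_mod_cast Finset.card_le_card (Finset.filter_subset_filter _ (Finset.filter_subset _ _))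

open Classical in
theorem aux_descent [Fintype K] [FiniteDimensional K V] (t : ℕ)
    (A : Finset (Submodule K V)) (B : ℚ) (hB0 : 0 ≤ B)
    (hB : ∀ S : Submodule K V, finrank K S = t → ((A.filter (fun F => S ≤ F)).card : ℚ) ≤ B)
    (a : ℕ) : ∀ X : Submodule K V, finrank K X = t + a →
      ((A.filter (fun F => t ≤ finrank K ↥(F ⊓ X))).card : ℚ) ≤
        ((Fintype.card K : ℚ) ^ (t + 1)) ^ a * B := by
  induction a with
  | zero =>
    intro X hX
    simp only [pow_zero, one_mul]
    refine le_trans ?_ (hB X hX)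
    have : A.filter (fun F => t ≤ finrank K ↥(F ⊓ X)) ⊆ A.filter (fun F => X ≤ F) := by
      intro F hF
      rw [Finset.mem_filter] at hF ⊢
      refine ⟨hF.1, ?_⟩
      have h := Submodule.eq_of_le_of_finrank_le (inf_le_right : F ⊓ X ≤ X) (by omega)
      exact inf_eq_right.1 h
    exact_mod_cast Finset.card_le_card this
  | succ a ih =>
    intro X hX
    obtain ⟨Z, -, hZ⟩ := aux_exists_sub (⊤ : Submodule K X) a (by rw [finrank_top]; omega)
    have hQ : finrank K (X ⧸ Z) = t + 1 := by
      have := Submodule.finrank_quotient_add_finrank Z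
      omega
    have : Finite (Dual K (X ⧸ Z)) := Module.finite_of_finite K
    have : Fintype (Dual K (X ⧸ Z)) := Fintype.ofFinite _
    let H : Dual K (X ⧸ Z) → Submodule K V := fun ψ =>
      (LinearMap.ker (ψ ∘ₗ Z.mkQ)).map X.subtype
    have hH : ∀ ψ, ψ ≠ 0 → finrank K (H ψ) = t + a := by
      intro ψ hψ
      have h1 : finrank K (H ψ) = finrank K (LinearMap.ker (ψ ∘ₗ Z.mkQ)) :=
        Submodule.finrank_map_subtype_eq _ _
      have h0 : ψ ∘ₗ Z.mkQ ≠ 0 := by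
        intro h
        apply hψ
        ext x
        exact LinearMap.congr_fun h x
      have h2 := Module.Dual.finrank_ker_add_one_of_ne_zero (f := ψ ∘ₗ Z.mkQ) h0
      omega
    have key := aux_card_le (A.filter (fun F => t ≤ finrank K ↥(F ⊓ X)))
      (Finset.univ.filter (fun ψ : Dual K (X ⧸ Z) => ψ ≠ 0))
      (fun ψ F => t ≤ finrank K ↥(F ⊓ H ψ)) (((Fintype.card K : ℚ) ^ (t + 1)) ^ a * B) ?_ ?_
    · refine key.trans ?_
      rw [pow_succ' _ a, mul_assoc]
      apply mul_le_mul_of_nonneg_right _ (by positivity)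
      have h1 : (Finset.univ.filter (fun ψ : Dual K (X ⧸ Z) => ψ ≠ 0)).card
          ≤ Fintype.card (Dual K (X ⧸ Z)) := Finset.card_le_univ _
      rw [Module.card_eq_pow_finrank (K := K), Subspace.dual_finrank_eq, hQ] at h1
      exact_mod_cast h1
    · intro F hF
      rw [Finset.mem_filter] at hF
      obtain ⟨T, hT, hTd⟩ := aux_exists_sub (F ⊓ X) t hF.2
      let T' : Submodule K X := T.comap X.subtype
      have hT' : T'.map X.subtype = T := by
        rw [Submodule.map_comap_subtype]
        exact inf_eq_right.2 (hT.trans inf_le_right)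
      have hT'd : finrank K T' = t := by
        rw [← hTd, ← hT']
        exact (Submodule.finrank_map_subtype_eq _ _).symm
      have h1 : finrank K (T'.map Z.mkQ) ≤ t := hT'd ▸ Submodule.finrank_map_le _ _
      have h2 : T'.map Z.mkQ < ⊤ := by
        rw [lt_top_iff_ne_top]
        intro h
        rw [h, finrank_top] at h1
        omega
      obtain ⟨ψ, hψ, hk⟩ := Submodule.exists_le_ker_of_lt_top _ h2
      refine ⟨ψ, by simp [hψ], ?_⟩
      have : T ≤ F ⊓ H ψ := by
        refine le_inf (hT.trans inf_le_left) ?_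
        rw [← hT']
        apply Submodule.map_mono
        rw [LinearMap.ker_comp]
        exact Submodule.map_le_iff_le_comap.1 hk
      rw [← hTd]
      exact Submodule.finrank_mono this
    · intro ψ hψ
      refine le_trans ?_ (ih (H ψ) (hH ψ (by simpa using hψ)))
      have hsub : (A.filter (fun F => t ≤ finrank K ↥(F ⊓ X))).filter
          (fun F => t ≤ finrank K ↥(F ⊓ H ψ)) ⊆ A.filter (fun F => t ≤ finrank K ↥(F ⊓ H ψ)) := by
        intro F hF
        simp only [Finset.mem_filter] at hF ⊢
        exact ⟨hF.1.1, hF.2⟩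
      have := Finset.card_le_card hsub
      exact_mod_cast (le_trans (le_of_eq (by congr)) this)

theorem aux_Nprime_pos (q a m ν : ℕ) (hq : 2 ≤ q) (hm : m ≤ ν) : 0 < Nprime q a m ν := by
  unfold Nprime
  apply Finset.prod_pos
  intro i hi
  rw [Finset.mem_Icc] at hi
  have hq' : (1 : ℚ) < q := by exact_mod_cast hq
  apply div_pos
  · have := one_lt_zpow₀ hq' (n := 2 * ((ν : ℤ) - m + i)) (by omega)
    linarith
  · have := one_lt_zpow₀ hq' (n := (i : ℤ)) (by omega)
    linarith

theorem aux_Nprime_succ (q a m ν : ℕ) (ham : a < m) (hm : m ≤ ν) :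
    Nprime q a m ν = ((q : ℚ) ^ (2 * (ν - a)) - 1) / ((q : ℚ) ^ (m - a) - 1)
      * Nprime q (a + 1) m ν := by
  unfold Nprime
  have h : m - a = (m - (a + 1)) + 1 := by omega
  rw [h, Finset.prod_Icc_succ_top (by omega), mul_comm]
  congr 3
  · rw [← zpow_natCast]
    congr 1
    push_cast [show a ≤ ν by omega, show a + 1 ≤ m by omega]
    ring

theorem aux_Nprime_step (q a m ν e : ℕ) (hq : 2 ≤ q) (ham : a < m) (hm : m ≤ ν)
    (he : e + m + a ≤ 2 * ν) :
    (q : ℚ) ^ e * Nprime q (a + 1) m ν < Nprime q a m ν := by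
  rw [aux_Nprime_succ q a m ν ham hm]
  apply mul_lt_mul_of_pos_right _ (aux_Nprime_pos q _ m ν hq hm)
  have hq' : (1 : ℚ) < q := by exact_mod_cast hq
  have h1 : (1 : ℚ) < (q : ℚ) ^ (m - a) := one_lt_pow₀ hq' (by omega)
  rw [lt_div_iff₀ (by linarith)]
  rcases Nat.eq_zero_or_pos e with rfl | he0
  · have : (q : ℚ) ^ (m - a) < (q : ℚ) ^ (2 * (ν - a)) := pow_lt_pow_right₀ hq' (by omega)
    linarith
  · have h2 : (1 : ℚ) < (q : ℚ) ^ e := one_lt_pow₀ hq' (by omega)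
    have h3 : (q : ℚ) ^ e * (q : ℚ) ^ (m - a) ≤ (q : ℚ) ^ (2 * (ν - a)) := by
      rw [← pow_add]
      exact pow_le_pow_right₀ hq'.le (by omega)
    linarith

theorem aux_Nprime_iter (q m ν e : ℕ) (hq : 2 ≤ q) (hm : m ≤ ν) (b : ℕ) :
    ∀ a, a + b ≤ m → e + m + a + b ≤ 2 * ν + 1 →
    ((q : ℚ) ^ e) ^ b * Nprime q (a + b) m ν ≤ Nprime q a m ν := by
  induction b with
  | zero => intro a _ _; simp
  | succ b ih =>
    intro a h1 h2
    have h3 := ih (a + 1) (by omega) (by omega)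
    have h4 := aux_Nprime_step q a m ν e hq (by omega) hm (by omega)
    rw [show a + (b + 1) = a + 1 + b by ring, pow_succ', mul_assoc]
    refine le_trans ?_ h4.le
    exact mul_le_mul_of_nonneg_left h3 (by positivity)

theorem aux_Nprime_iter_lt (q m ν e : ℕ) (hq : 2 ≤ q) (hm : m ≤ ν) (b : ℕ) (hb : 0 < b)
    (a : ℕ) (h1 : a + b ≤ m) (h2 : e + m + a + b ≤ 2 * ν + 1) :
    ((q : ℚ) ^ e) ^ b * Nprime q (a + b) m ν < Nprime q a m ν := by
  obtain ⟨b, rfl⟩ : ∃ c, b = c + 1 := ⟨b - 1, by omega⟩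
  have h3 := aux_Nprime_iter q m ν e hq hm b (a + 1) (by omega) (by omega)
  have h4 := aux_Nprime_step q a m ν e hq (by omega) hm (by omega)
  rw [show a + (b + 1) = a + 1 + b by ring, pow_succ', mul_assoc]
  refine lt_of_le_of_lt ?_ h4
  exact mul_le_mul_of_nonneg_left h3 (by positivity)

open Classical in
theorem aux_card_mem [Fintype K] [Fintype V] (S : Submodule K V) :
    (Finset.univ.filter (fun w : V => w ∈ S)).card = Fintype.card K ^ finrank K S := by
  rw [← Module.card_eq_pow_finrank (K := K) (V := S), ← Fintype.card_subtype]

open Classical in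
theorem aux_card_diff [Fintype K] [Fintype V] (S F : Submodule K V) (h : S ≤ F) :
    ((Finset.univ.filter (fun w : V => w ∈ F ∧ w ∉ S)).card : ℚ) =
      (Fintype.card K : ℚ) ^ finrank K F - (Fintype.card K : ℚ) ^ finrank K S := by
  have h1 : Finset.univ.filter (fun w : V => w ∈ F ∧ w ∉ S) =
      Finset.univ.filter (fun w : V => w ∈ F) \ Finset.univ.filter (fun w : V => w ∈ S) := by
    ext w; simp
  have h2 : Finset.univ.filter (fun w : V => w ∈ S) ⊆ Finset.univ.filter (fun w : V => w ∈ F) := by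
    intro w hw
    simp only [Finset.mem_filter, Finset.mem_univ, true_and] at hw ⊢
    exact h hw
  rw [h1, Finset.cast_card_sdiff h2, aux_card_mem, aux_card_mem]
  push_cast
  rfl

open Classical in
theorem aux_count [Fintype K] [Fintype V] (q ν m : ℕ) (hK : Fintype.card K = q)
    (hV : finrank K V = 2 * ν) (hm : m ≤ ν)
    (f : V →ₗ[K] V →ₗ[K] K) (halt : ∀ x, f x x = 0)
    (hnd : ∀ x, (∀ y, f x y = 0) → x = 0)
    (A : Finset (Submodule K V)) (hA : ∀ F ∈ A, F ∈ polar f m) (k : ℕ) :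
    ∀ S : Submodule K V, finrank K S + k = m →
      ((A.filter (fun F => S ≤ F)).card : ℚ) ≤ Nprime q (finrank K S) m ν := by
  have hq : 2 ≤ q := hK ▸ Fintype.one_lt_card
  have hq' : (1 : ℚ) < q := by exact_mod_cast hq
  have hskew : ∀ x y, f x y = 0 → f y x = 0 := by
    intro x y h
    have h1 := halt (x + y)
    simp only [map_add, LinearMap.add_apply, halt, h, zero_add, add_zero] at h1
    exact h1
  have hND : LinearMap.BilinForm.Nondegenerate f :=
    ⟨hnd, fun y h => hnd y (fun x => hskew x y (h x))⟩
  induction k with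
  | zero =>
    intro S hS
    have h0 : m - finrank K S = 0 := by omega
    have hN : Nprime q (finrank K S) m ν = 1 := by simp [Nprime, h0]
    rw [hN]
    have : (A.filter (fun F => S ≤ F)).card ≤ 1 := by
      rw [Finset.card_le_one]
      have aux : ∀ F ∈ A.filter (fun F => S ≤ F), S = F := by
        intro F hF
        rw [Finset.mem_filter] at hF
        have := (hA F hF.1).2
        exact Submodule.eq_of_le_of_finrank_le hF.2 (by omega)
      intro F hF G hG
      rw [← aux F hF, ← aux G hG]
    exact_mod_cast this
  | succ k ih =>
    intro S hS
    rcases (A.filter (fun F => S ≤ F)).eq_empty_or_nonempty with h0 | ⟨F₀, hF₀⟩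
    · rw [h0]
      simpa using (aux_Nprime_pos q _ m ν hq hm).le
    have hS0 : TotallyIsotropic f S := by
      rw [Finset.mem_filter] at hF₀
      intro x hx y hy
      exact (hA F₀ hF₀.1).1 x (hF₀.2 hx) y (hF₀.2 hy)
    let P : Submodule K V := LinearMap.BilinForm.orthogonal f S
    have hPd : finrank K P = 2 * ν - finrank K S := by
      rw [← hV]
      exact LinearMap.BilinForm.finrank_orthogonal hND S
    have hP : ∀ F ∈ A, S ≤ F → F ≤ P := by
      intro F hF hSF y hy x hx
      exact (hA F hF).1 x (hSF hx) y hy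
    have hSP : S ≤ P := fun y hy x hx => hS0 x hx y hy
    let D := Finset.univ.filter (fun w : V => w ∈ P ∧ w ∉ S)
    have hD : (D.card : ℚ) = (q : ℚ) ^ (2 * ν - finrank K S) - (q : ℚ) ^ finrank K S := by
      rw [← hPd, ← hK]
      exact aux_card_diff S P hSP
    have hdc := Finset.sum_card_bipartiteAbove_eq_sum_card_bipartiteBelow
      (s := A.filter (fun F => S ≤ F)) (t := D) (fun (F : Submodule K V) (w : V) => w ∈ F)
    have hdc' : ∑ F ∈ A.filter (fun F => S ≤ F),
        ((D.bipartiteAbove (fun (F : Submodule K V) (w : V) => w ∈ F) F).card : ℚ) =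
        ∑ w ∈ D, (((A.filter (fun F => S ≤ F)).bipartiteBelow
          (fun (F : Submodule K V) (w : V) => w ∈ F) w).card : ℚ) := by
      exact_mod_cast hdc
    have hL : ∑ F ∈ A.filter (fun F => S ≤ F),
        ((D.bipartiteAbove (fun (F : Submodule K V) (w : V) => w ∈ F) F).card : ℚ) =
        (A.filter (fun F => S ≤ F)).card * ((q : ℚ) ^ m - (q : ℚ) ^ finrank K S) := by
      rw [← nsmul_eq_mul]
      apply Finset.sum_eq_card_nsmul
      intro F hF
      rw [Finset.mem_filter] at hF
      have h1 : D.bipartiteAbove (fun (F : Submodule K V) (w : V) => w ∈ F) F =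
          Finset.univ.filter (fun w : V => w ∈ F ∧ w ∉ S) := by
        ext w
        simp only [Finset.mem_bipartiteAbove, D, Finset.mem_filter, Finset.mem_univ, true_and]
        constructor
        · rintro ⟨⟨_, h⟩, h'⟩; exact ⟨h', h⟩
        · rintro ⟨h', h⟩; exact ⟨⟨hP F hF.1 hF.2 h', h⟩, h'⟩
      rw [h1, aux_card_diff S F hF.2, hK, (hA F hF.1).2]
    have hR : ∑ w ∈ D, (((A.filter (fun F => S ≤ F)).bipartiteBelow
          (fun (F : Submodule K V) (w : V) => w ∈ F) w).card : ℚ) ≤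
        D.card * Nprime q (finrank K S + 1) m ν := by
      rw [← nsmul_eq_mul]
      apply Finset.sum_le_card_nsmul
      intro w hw
      simp only [D, Finset.mem_filter, Finset.mem_univ, true_and] at hw
      have h1 := aux_finrank_sup_span S w hw.2
      have h2 := ih (S ⊔ Submodule.span K {w}) (by omega)
      rw [h1] at h2
      refine le_trans ?_ h2
      have : (A.filter (fun F => S ≤ F)).bipartiteBelow
          (fun (F : Submodule K V) (w : V) => w ∈ F) w ⊆
          A.filter (fun F => S ⊔ Submodule.span K {w} ≤ F) := by
        intro F hF
        simp only [Finset.mem_bipartiteBelow, Finset.mem_filter] at hF ⊢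
        refine ⟨hF.1.1, sup_le hF.1.2 ?_⟩
        rw [Submodule.span_singleton_le_iff_mem]
        exact hF.2
      exact_mod_cast Finset.card_le_card this
    rw [← hdc', hL, hD] at hR
    set s := finrank K S with hs
    rw [aux_Nprime_succ q s m ν (by omega) hm]
    have e1 : (q : ℚ) ^ m = (q : ℚ) ^ s * (q : ℚ) ^ (m - s) := by
      rw [← pow_add]; congr 1; omega
    have e2 : (q : ℚ) ^ (2 * ν - s) = (q : ℚ) ^ s * (q : ℚ) ^ (2 * (ν - s)) := by
      rw [← pow_add]; congr 1; omega
    rw [e1, e2] at hR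
    have hp : (0 : ℚ) < (q : ℚ) ^ s := by positivity
    have h1 : (1 : ℚ) < (q : ℚ) ^ (m - s) := one_lt_pow₀ hq' (by omega)
    rw [div_mul_eq_mul_div, le_div_iff₀ (by linarith)]
    refine le_of_mul_le_mul_left ?_ hp
    linarith

open Classical in
theorem aux_half [Fintype K] [Fintype V] (q ν m₁ m₂ t a b : ℕ) (hK : Fintype.card K = q)
    (hV : finrank K V = 2 * ν) (hm : m₁ ≤ ν) (htm : t ≤ m₂) (hb : t + b ≤ m₁)
    (f : V →ₗ[K] V →ₗ[K] K) (halt : ∀ x, f x x = 0)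
    (hnd : ∀ x, (∀ y, f x y = 0) → x = 0)
    (A₁ A₂ : Finset (Submodule K V)) (hA₁ : ∀ F ∈ A₁, F ∈ polar f m₁)
    (hA₂ : ∀ G ∈ A₂, finrank K G = m₂)
    (hcross : ∀ F ∈ A₁, ∀ G ∈ A₂, t ≤ finrank K ↥(F ⊓ G))
    (X : Submodule K V) (hX : finrank K X = t + a) (hXc : ∀ F ∈ A₁, t ≤ finrank K ↥(F ⊓ X))
    (hmin : ∀ S : Submodule K V, finrank K S < t + b → ∃ G ∈ A₂, finrank K ↥(S ⊓ G) < t) :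
    (A₁.card : ℚ) ≤ ((q : ℚ) ^ (t + 1)) ^ a *
      (((q : ℚ) ^ (m₂ - t + 1)) ^ b * Nprime q (t + b) m₁ ν) := by
  subst hK
  have hq : 2 ≤ Fintype.card K := Fintype.one_lt_card
  have hN := (aux_Nprime_pos (Fintype.card K) (t + b) m₁ ν hq hm).le
  have h1 := aux_iter t m₂ (t + b) htm A₁ A₂ hA₂ hcross hmin (Nprime (Fintype.card K) (t + b) m₁ ν)
    hN (fun S hS => by
      rw [← hS]
      exact aux_count _ ν m₁ rfl hV hm f halt hnd A₁ hA₁ (m₁ - (t + b)) S (by omega)) b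
  have h2 := aux_descent t A₁ _ (by positivity) (fun S hS => h1 S (by omega)) a X hX
  rwa [Finset.filter_true_of_mem hXc] at h2

theorem aux_mincover [FiniteDimensional K V] (t m : ℕ) (A : Finset (Submodule K V))
    (hA : A.Nonempty) (X₀ : Submodule K V) (hX₀ : finrank K X₀ = m)
    (hc : ∀ F ∈ A, t ≤ finrank K ↥(F ⊓ X₀)) :
    ∃ (a : ℕ) (X : Submodule K V), finrank K X = t + a ∧ t + a ≤ m ∧
      (∀ F ∈ A, t ≤ finrank K ↥(F ⊓ X)) ∧
      (∀ S : Submodule K V, finrank K S < t + a → ∃ G ∈ A, finrank K ↥(S ⊓ G) < t) := by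
  classical
  have hex : ∃ n, ∃ X : Submodule K V, finrank K X = n ∧ ∀ F ∈ A, t ≤ finrank K ↥(F ⊓ X) :=
    ⟨m, X₀, hX₀, hc⟩
  obtain ⟨X, hX, hXc⟩ := Nat.find_spec hex
  obtain ⟨F, hF⟩ := hA
  have h1 : t ≤ Nat.find hex := by
    rw [← hX]
    exact (hXc F hF).trans (Submodule.finrank_mono inf_le_right)
  obtain ⟨a, ha⟩ := Nat.exists_eq_add_of_le h1
  refine ⟨a, X, by omega, ?_, hXc, ?_⟩
  · rw [← ha]
    exact Nat.find_min' hex ⟨X₀, hX₀, hc⟩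
  · intro S hS
    have := Nat.find_min hex (m := finrank K S) (by omega)
    by_contra hcon
    push Not at hcon
    apply this
    refine ⟨S, rfl, fun G hG => ?_⟩
    rw [inf_comm]
    exact hcon G hG

theorem stmt_1
    (q ν m₁ m₂ t : ℕ) (hq : IsPrimePow q)
    {K : Type} [Field K] [Fintype K] (hK : Fintype.card K = q)
    (f : (Fin (2 * ν) → K) →ₗ[K] (Fin (2 * ν) → K) →ₗ[K] K)
    (halt : ∀ x, f x x = 0)
    (hnd : ∀ x, (∀ y, f x y = 0) → x = 0)
    (hν : 0 < ν) (hm₂ : 0 < m₂) (ht : 0 < t)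
    (hm : m₂ ≤ m₁) (hmt : t ≤ m₂) (hdim : 2 * m₁ + m₂ + 1 ≤ 2 * ν)
    (ℱ₁ ℱ₂ : Set (Submodule K (Fin (2 * ν) → K)))
    (h1 : ℱ₁ ⊆ polar f m₁) (h2 : ℱ₂ ⊆ polar f m₂)
    (hcross : ∀ F₁ ∈ ℱ₁, ∀ F₂ ∈ ℱ₂, t ≤ finrank K ↥(F₁ ⊓ F₂))
    (heq : (ℱ₁.ncard : ℚ) * ℱ₂.ncard = Nprime q t m₁ ν * Nprime q t m₂ ν) :
    ∃ T ∈ polar f t,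
      ℱ₁ = {F | F ∈ polar f m₁ ∧ T ≤ F} ∧ ℱ₂ = {F | F ∈ polar f m₂ ∧ T ≤ F} := by
  classical
  have hq2 : 2 ≤ q := hK ▸ Fintype.one_lt_card
  have hV : finrank K (Fin (2 * ν) → K) = 2 * ν := by simp
  have hm₁ν : m₁ ≤ ν := by omega
  have hm₂ν : m₂ ≤ ν := by omega
  have hN₁ := aux_Nprime_pos q t m₁ ν hq2 hm₁ν
  have hN₂ := aux_Nprime_pos q t m₂ ν hq2 hm₂ν
  obtain ⟨A₁, rfl⟩ : ∃ A : Finset (Submodule K (Fin (2 * ν) → K)), ℱ₁ = ↑A :=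
    ⟨ℱ₁.toFinite.toFinset, by simp⟩
  obtain ⟨A₂, rfl⟩ : ∃ A : Finset (Submodule K (Fin (2 * ν) → K)), ℱ₂ = ↑A :=
    ⟨ℱ₂.toFinite.toFinset, by simp⟩
  rw [Set.ncard_coe_finset, Set.ncard_coe_finset] at heq
  have hA₁ : ∀ F ∈ A₁, F ∈ polar f m₁ := fun F hF => h1 hF
  have hA₂ : ∀ F ∈ A₂, F ∈ polar f m₂ := fun F hF => h2 hF
  have hc₁ : ∀ F ∈ A₁, ∀ G ∈ A₂, t ≤ finrank K ↥(F ⊓ G) := fun F hF G hG => hcross F hF G hG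
  have hc₂ : ∀ G ∈ A₂, ∀ F ∈ A₁, t ≤ finrank K ↥(G ⊓ F) := fun G hG F hF => by
    rw [inf_comm]; exact hcross F hF G hG
  have hne₁ : A₁.Nonempty := by
    rw [Finset.nonempty_iff_ne_empty]
    rintro rfl
    simp only [Finset.card_empty, Nat.cast_zero, zero_mul] at heq
    exact (mul_pos hN₁ hN₂).ne heq
  have hne₂ : A₂.Nonempty := by
    rw [Finset.nonempty_iff_ne_empty]
    rintro rfl
    simp only [Finset.card_empty, Nat.cast_zero, mul_zero] at heq
    exact (mul_pos hN₁ hN₂).ne heq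
  obtain ⟨F₀, hF₀⟩ := hne₁
  obtain ⟨G₀, hG₀⟩ := hne₂
  obtain ⟨a, X, hX, ha, hXc, hXmin⟩ := aux_mincover t m₂ A₁ ⟨F₀, hF₀⟩ G₀ (hA₂ G₀ hG₀).2
    (fun F hF => hc₁ F hF G₀ hG₀)
  obtain ⟨b, Y, hY, hb, hYc, hYmin⟩ := aux_mincover t m₁ A₂ ⟨G₀, hG₀⟩ F₀ (hA₁ F₀ hF₀).2
    (fun G hG => hc₂ G hG F₀ hF₀)
  have B₁ := aux_half q ν m₁ m₂ t a b hK hV hm₁ν hmt hb f halt hnd A₁ A₂ hA₁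
    (fun G hG => (hA₂ G hG).2) hc₁ X hX hXc hYmin
  have B₂ := aux_half q ν m₂ m₁ t b a hK hV hm₂ν (by omega) ha f halt hnd A₂ A₁ hA₂
    (fun G hG => (hA₁ G hG).2) hc₂ Y hY hYc hXmin
  have hprod : (A₁.card : ℚ) * A₂.card ≤
      (((q : ℚ) ^ (m₂ + 2)) ^ b * Nprime q (t + b) m₁ ν) *
      (((q : ℚ) ^ (m₁ + 2)) ^ a * Nprime q (t + a) m₂ ν) := by
    have hN := (aux_Nprime_pos q (t + b) m₁ ν hq2 hm₁ν).le
    refine (mul_le_mul B₁ B₂ (by positivity) (by positivity)).trans (le_of_eq ?_)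
    rw [show m₂ + 2 = (t + 1) + (m₂ - t + 1) by omega,
      show m₁ + 2 = (t + 1) + (m₁ - t + 1) by omega, pow_add _ (t + 1), pow_add _ (t + 1),
      mul_pow, mul_pow]
    ring
  have L₁ := aux_Nprime_iter q m₁ ν (m₂ + 2) hq2 hm₁ν b t hb (by omega)
  have L₂ := aux_Nprime_iter q m₂ ν (m₁ + 2) hq2 hm₂ν a t ha (by omega)
  have hP₁ := aux_Nprime_pos q (t + b) m₁ ν hq2 hm₁ν
  have hP₂ := aux_Nprime_pos q (t + a) m₂ ν hq2 hm₂ν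
  have hq0 : (0 : ℚ) < q := by exact_mod_cast (by omega : 0 < q)
  have hb0 : b = 0 := by
    by_contra hb0
    have L := aux_Nprime_iter_lt q m₁ ν (m₂ + 2) hq2 hm₁ν b (by omega) t hb (by omega)
    have := mul_lt_mul L L₂ (by positivity) hN₁.le
    linarith
  have ha0 : a = 0 := by
    by_contra ha0
    have L := aux_Nprime_iter_lt q m₂ ν (m₁ + 2) hq2 hm₂ν a (by omega) t ha (by omega)
    have := mul_lt_mul' L₁ L (by positivity) hN₁
    linarith
  subst hb0 ha0
  simp only [pow_zero, one_mul, add_zero] at B₁ B₂ hX ha hb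
  have E₁ : (A₁.card : ℚ) = Nprime q t m₁ ν := by
    apply le_antisymm B₁
    by_contra hlt
    push Not at hlt
    have := mul_lt_mul hlt B₂ (by exact_mod_cast Finset.card_pos.2 ⟨G₀, hG₀⟩) hN₁.le
    linarith
  have E₂ : (A₂.card : ℚ) = Nprime q t m₂ ν := by
    rw [E₁] at heq
    exact mul_left_cancel₀ hN₁.ne' heq
  have hX1 : ∀ F ∈ A₁, X ≤ F := by
    intro F hF
    have h := Submodule.eq_of_le_of_finrank_le (inf_le_right : F ⊓ X ≤ X)
      (by have := hXc F hF; omega)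
    exact inf_eq_right.1 h
  have hX2 : ∀ G ∈ A₂, X ≤ G := by
    intro G hG
    by_contra hXG
    have hlt : finrank K ↥(X ⊓ G) < t := by
      by_contra hge
      have h := Submodule.eq_of_le_of_finrank_le (inf_le_left : X ⊓ G ≤ X) (by omega)
      exact hXG (inf_eq_left.1 h)
    have htm₁ : t < m₁ := by
      by_contra hge
      have h3 := (hA₁ F₀ hF₀).2
      have h := Submodule.eq_of_le_of_finrank_le (hX1 F₀ hF₀) (by omega)
      have h4 := hc₁ F₀ hF₀ G hG
      rw [← h] at h4
      omega
    have hJ := aux_join t m₂ X G (hA₂ G hG).2 hlt hmt A₁ (fun F hF => ⟨hX1 F hF, hc₁ F hF G hG⟩)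
      (Nprime q (t + 1) m₁ ν) (aux_Nprime_pos q (t + 1) m₁ ν hq2 hm₁ν).le (fun S' hS' => by
        rw [hX] at hS'
        rw [← hS']
        exact aux_count q ν m₁ hK hV hm₁ν f halt hnd A₁ hA₁ (m₁ - (t + 1)) S' (by omega))
    have hs := aux_Nprime_step q t m₁ ν (m₂ - t + 1) hq2 htm₁ hm₁ν (by omega)
    rw [hK] at hJ
    linarith
  have fin : ∀ (m : ℕ) (A : Finset (Submodule K (Fin (2 * ν) → K))), t ≤ m → m ≤ ν →
      (∀ F ∈ A, F ∈ polar f m) → (∀ F ∈ A, X ≤ F) → (A.card : ℚ) = Nprime q t m ν →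
      (A : Set (Submodule K (Fin (2 * ν) → K))) = {F | F ∈ polar f m ∧ X ≤ F} := by
    intro m A htm hmν hAp hAX hAc
    let P : Finset (Submodule K (Fin (2 * ν) → K)) := (Set.toFinite (polar f m)).toFinset
    have hPm : ∀ F, F ∈ P ↔ F ∈ polar f m := by simp [P]
    have hcnt := aux_count q ν m hK hV hmν f halt hnd P (fun F hF => (hPm F).1 hF) (m - t) X
      (by omega)
    rw [hX, ← hAc] at hcnt
    have hsub : A ⊆ P.filter (fun F => X ≤ F) := by
      intro F hF
      rw [Finset.mem_filter]
      exact ⟨(hPm F).2 (hAp F hF), hAX F hF⟩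
    have := Finset.eq_of_subset_of_card_le hsub (by exact_mod_cast hcnt)
    ext F
    rw [this]
    simp [hPm]
  refine ⟨X, ⟨?_, hX⟩, fin m₁ A₁ (by omega) hm₁ν hA₁ hX1 E₁, fin m₂ A₂ hmt hm₂ν hA₂ hX2 E₂⟩
  intro x hx y hy
  exact (hA₁ F₀ hF₀).1 x (hX1 F₀ hF₀ hx) y (hX1 F₀ hF₀ hy)

end
end
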